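/- arXiv:1510.03044 — 7 statements merged into one kernel-verified Lean document; each statement's English description precedes it below -/
import Mathlib

section
/- Let n ≥ 1 and let D = diag(τ_1,…,τ_n) and R = diag(R_1,…,R_n) be real diagonal matrices with τ_i > 0 and R_i > 0 for all i. Let Y = Y_s + Y_c where Y_s = diag(G_11,…,G_nn) with G_ii ≥ 0, and Y_c is a real n×n matrix with nonpositive off-diagonal entries, nonnegative diagonal entries, and all row sums equal to zero. Then every eigenvalue λ ∈ ℂ of the matrix −D⁻¹(E + Y R) (E the n×n identity) satisfies Re λ ≤ −ψ, where ψ = min_{i} (1 + R_i G_ii)/τ_i. (Consequently the decentralized droop-controlled DC microgrid D İᵐ = −(E+YR)Iᵐ + YUᵈ is exponentially stable with decay rate at most −ψ.) -/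
open Matrix

/-!
Since diagonal matrices commute, `R` intertwines `-D⁻¹(E + Y R)` with `-D⁻¹(E + R Y)`, so every
eigenvalue of the former is one of the latter. The off-diagonal entries of the latter are
nonnegative, so the Gershgorin disc of row `i` reaches to the right exactly as far as the `i`-th
row sum, which is `-(1 + Rᵢ Gᵢᵢ) / τᵢ` because row `i` of `Y` sums to `Gᵢᵢ`.
-/

section Intertwining

open Module.End

theorem hasEigenvalue_of_comp_eq_comp {S V W : Type*} [CommRing S] [AddCommGroup V] [Module S V]
    [AddCommGroup W] [Module S W] {f : Module.End S V} {g : Module.End S W} {p : V →ₗ[S] W}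
    (hp : Function.Injective p) (hfg : p ∘ₗ f = g ∘ₗ p) {μ : S} (hμ : HasEigenvalue f μ) :
    HasEigenvalue g μ := by
  obtain ⟨v, hv⟩ := hμ.exists_hasEigenvector
  refine hasEigenvalue_of_hasEigenvector (x := p v) (hasEigenvector_iff.2 ⟨?_, ?_⟩)
  · rw [mem_eigenspace_iff, ← LinearMap.comp_apply, ← hfg, LinearMap.comp_apply, hv.apply_eq_smul,
      map_smul]
  · exact (map_ne_zero_iff p hp).2 hv.2

theorem hasEigenvalue_toLin'_map_of_mul_eq_mul {ι S T : Type*} [Fintype ι] [DecidableEq ι]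
    [CommRing S] [CommRing T] (φ : S →+* T) {P A B : Matrix ι ι S} (hP : IsUnit P)
    (hAB : P * A = B * P) {μ : T} (hμ : HasEigenvalue (toLin' (A.map φ)) μ) :
    HasEigenvalue (toLin' (B.map φ)) μ := by
  have hP_inj : Function.Injective (toLin' (P.map φ)) :=
    mulVec_injective_of_isUnit (hP.map φ.mapMatrix)
  refine hasEigenvalue_of_comp_eq_comp hP_inj ?_ hμ
  rw [← toLin'_mul, ← toLin'_mul, ← Matrix.map_mul, ← Matrix.map_mul, hAB]

end Intertwining

section Gershgorin

open Module.End

variable {ι : Type*} [Fintype ι] [DecidableEq ι]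

theorem exists_re_le_re_diag_add_sum_norm {𝕜 : Type*} [RCLike 𝕜] {A : Matrix ι ι 𝕜} {μ : 𝕜}
    (hμ : HasEigenvalue (toLin' A) μ) :
    ∃ i, RCLike.re μ ≤ RCLike.re (A i i) + ∑ j ∈ Finset.univ.erase i, ‖A i j‖ := by
  obtain ⟨i, hi⟩ := eigenvalue_mem_ball hμ
  rw [mem_closedBall_iff_norm] at hi
  refine ⟨i, ?_⟩
  have hre := (RCLike.re_le_norm (μ - A i i)).trans hi
  rw [map_sub] at hre
  linarith

theorem exists_re_le_sum_row_of_offDiag_nonneg {A : Matrix ι ι ℝ}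
    (hA : ∀ i j, i ≠ j → 0 ≤ A i j) {μ : ℂ}
    (hμ : HasEigenvalue (toLin' (A.map Complex.ofRealHom)) μ) :
    ∃ i, μ.re ≤ ∑ j, A i j := by
  obtain ⟨i, hi⟩ := exists_re_le_re_diag_add_sum_norm hμ
  refine ⟨i, hi.trans_eq ?_⟩
  rw [← Finset.add_sum_erase _ _ (Finset.mem_univ i)]
  congr 1
  refine Finset.sum_congr rfl fun j hj => ?_
  exact Complex.norm_of_nonneg (hA i j (Finset.ne_of_mem_erase hj).symm)

end Gershgorin

section DiagonalScaling

variable {ι : Type*} [Fintype ι] [DecidableEq ι]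

theorem inv_diagonal_of_ne_zero {K : Type*} [Field K] {d : ι → K} (hd : ∀ i, d i ≠ 0) :
    (diagonal d)⁻¹ = diagonal d⁻¹ := by
  refine inv_eq_right_inv ?_
  rw [diagonal_mul_diagonal', ← diagonal_one]
  exact congrArg diagonal (funext fun i => mul_inv_cancel₀ (hd i))

theorem diagonal_mul_neg_inv_diagonal_mul_one_add {S : Type*} [CommRing S] (d r : ι → S)
    (Y : Matrix ι ι S) :
    diagonal r * -((diagonal d)⁻¹ * (1 + Y * diagonal r)) =
      -((diagonal d)⁻¹ * (1 + diagonal r * Y)) * diagonal r := by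
  have hcomm : diagonal r * (diagonal d)⁻¹ = (diagonal d)⁻¹ * diagonal r := by
    rw [inv_diagonal]
    exact commute_diagonal _ _
  rw [mul_neg, neg_mul, ← mul_assoc, hcomm]
  noncomm_ring

theorem neg_inv_diagonal_mul_one_add_apply {K : Type*} [Field K] {d : ι → K}
    (hd : ∀ i, d i ≠ 0) (r : ι → K) (Y : Matrix ι ι K) (i j : ι) :
    (-((diagonal d)⁻¹ * (1 + diagonal r * Y))) i j =
      -(((1 : Matrix ι ι K) i j + r i * Y i j) / d i) := by
  rw [inv_diagonal_of_ne_zero hd, neg_apply, diagonal_mul, Matrix.add_apply, diagonal_mul,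
    Pi.inv_apply, inv_mul_eq_div]

theorem sum_row_neg_inv_diagonal_mul_one_add {K : Type*} [Field K] {d : ι → K}
    (hd : ∀ i, d i ≠ 0) (r : ι → K) (Y : Matrix ι ι K) (i : ι) :
    ∑ j, (-((diagonal d)⁻¹ * (1 + diagonal r * Y))) i j = -((1 + r i * ∑ j, Y i j) / d i) := by
  simp only [neg_inv_diagonal_mul_one_add_apply hd, Finset.sum_neg_distrib, ← Finset.sum_div,
    Finset.sum_add_distrib, ← Finset.mul_sum, one_apply, Finset.sum_ite_eq, Finset.mem_univ,
    if_true]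

theorem sum_row_diagonal_add {S : Type*} [AddCommMonoid S] (d : ι → S) (A : Matrix ι ι S) (i : ι) :
    ∑ j, (diagonal d + A) i j = d i + ∑ j, A i j := by
  simp [Finset.sum_add_distrib, diagonal_apply]

end DiagonalScaling

theorem droop_decentralized_eigenvalue_bound_general {ι : Type*} [Fintype ι] [DecidableEq ι]
    {τ r : ι → ℝ} (hτ : ∀ i, 0 < τ i) (hr : ∀ i, 0 < r i) {Y : Matrix ι ι ℝ}
    (hY : ∀ i j, i ≠ j → Y i j ≤ 0) {ψ : ℝ} (hψ : ∀ i, ψ ≤ (1 + r i * ∑ j, Y i j) / τ i) {μ : ℂ}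
    (hμ : Module.End.HasEigenvalue
      (toLin' ((-((diagonal τ)⁻¹ * (1 + Y * diagonal r))).map Complex.ofRealHom)) μ) :
    μ.re ≤ -ψ := by
  have hτ_ne : ∀ i, τ i ≠ 0 := fun i => (hτ i).ne'
  have hr_unit : IsUnit (diagonal r) :=
    isUnit_diagonal.2 (Pi.isUnit_iff.2 fun i => (hr i).ne'.isUnit)
  have h_offDiag : ∀ i j, i ≠ j → 0 ≤ (-((diagonal τ)⁻¹ * (1 + diagonal r * Y))) i j := by
    intro i j hij
    rw [neg_inv_diagonal_mul_one_add_apply hτ_ne, one_apply_ne hij, zero_add, neg_nonneg]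
    exact div_nonpos_of_nonpos_of_nonneg
      (mul_nonpos_of_nonneg_of_nonpos (hr i).le (hY i j hij)) (hτ i).le
  obtain ⟨i, hi⟩ := exists_re_le_sum_row_of_offDiag_nonneg h_offDiag <|
    hasEigenvalue_toLin'_map_of_mul_eq_mul Complex.ofRealHom hr_unit
      (diagonal_mul_neg_inv_diagonal_mul_one_add τ r Y) hμ
  rw [sum_row_neg_inv_diagonal_mul_one_add hτ_ne] at hi
  exact hi.trans (neg_le_neg (hψ i))

/-- For the decentralized droop-controlled DC microgrid, every complex
eigenvalue of `-(D⁻¹ (E + Y R))` has real part at most `-ψ`, where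
`ψ = min_i (1 + R_i G_ii)/τ_i`. -/
theorem droop_decentralized_eigenvalue_bound
    (n : ℕ) (hn : 0 < n)
    (τ Rv G : Fin n → ℝ)
    (hτ : ∀ i, 0 < τ i) (hR : ∀ i, 0 < Rv i) (hG : ∀ i, 0 ≤ G i)
    (Yc : Matrix (Fin n) (Fin n) ℝ)
    (hYcoff : ∀ i j, i ≠ j → Yc i j ≤ 0)
    (hYcdiag : ∀ i, 0 ≤ Yc i i)
    (hYcrow : ∀ i, ∑ j, Yc i j = 0)
    (D R Ys Y : Matrix (Fin n) (Fin n) ℝ)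
    (hD : D = Matrix.diagonal τ) (hRm : R = Matrix.diagonal Rv)
    (hYs : Ys = Matrix.diagonal G) (hY : Y = Ys + Yc)
    (ψ : ℝ)
    (hψ : ψ = Finset.univ.inf' ⟨⟨0, hn⟩, Finset.mem_univ _⟩
      (fun i => (1 + Rv i * G i) / τ i))
    (lam : ℂ) (v : Fin n → ℂ) (hv : v ≠ 0)
    (heig : ((-(D⁻¹ * (1 + Y * R))).map (Complex.ofReal)) *ᵥ v = lam • v) :
    lam.re ≤ -ψ := by
  subst hD hRm hYs hY hψ
  refine droop_decentralized_eigenvalue_bound_general hτ hR (Y := diagonal G + Yc)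
    (fun i j hij => by simpa [hij] using hYcoff i j hij) (fun i => ?_)
    (Module.End.hasEigenvalue_of_hasEigenvector
      (Module.End.hasEigenvector_iff.2 ⟨Module.End.mem_eigenspace_iff.2 heig, hv⟩))
  rw [sum_row_diagonal_add, hYcrow, add_zero]
  exact Finset.inf'_le _ (Finset.mem_univ i)
end

section
/- Let n ≥ 1, let Y_c be a real symmetric positive semidefinite n×n matrix with Y_c·1ₙ = 0 (1ₙ the all-ones vector), let g ≥ 0, r > 0, u_d ∈ ℝ, and set Y = gE + Y_c and R = rE (E the identity). Then E + Y R is invertible and the steady-state current vector I^ss = (E + Y R)⁻¹ Y (u_d·1ₙ) equals (g/(1+gr))·u_d·1ₙ; in particular all nodes carry the same steady-state current. -/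
open Matrix

section Eigenvector

variable {ι K : Type*} [Fintype ι] [DecidableEq ι] [Field K]

theorem inv_mulVec_eq_inv_smul_of_mulVec_eq_smul {A : Matrix ι ι K} {c : K} {v : ι → K}
    (hA : IsUnit A) (hv : A *ᵥ v = c • v) : A⁻¹ *ᵥ v = c⁻¹ • v := by
  have v_eq : v = c • A⁻¹ *ᵥ v := by
    rw [← mulVec_smul, ← hv, mulVec_mulVec,
      nonsing_inv_mul A ((isUnit_iff_isUnit_det A).mp hA), one_mulVec]
  rcases eq_or_ne c 0 with rfl | hc
  · rw [zero_smul] at v_eq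
    rw [v_eq, mulVec_zero, smul_zero]
  · exact ((inv_smul_eq_iff₀ hc).mpr v_eq).symm

theorem inv_one_add_smul_mul_mulVec_of_mulVec_eq_smul {A : Matrix ι ι K} {μ r : K} {v : ι → K}
    (hA : IsUnit (1 + r • A)) (hv : A *ᵥ v = μ • v) :
    ((1 + r • A)⁻¹ * A) *ᵥ v = (μ / (1 + μ * r)) • v := by
  have shifted_eigenvector : (1 + r • A) *ᵥ v = (1 + μ * r) • v := by
    rw [add_mulVec, one_mulVec, smul_mulVec, hv, smul_smul, add_smul, one_smul, mul_comm r]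
  rw [← mulVec_mulVec, hv, mulVec_smul,
    inv_mulVec_eq_inv_smul_of_mulVec_eq_smul hA shifted_eigenvector, smul_smul, div_eq_mul_inv]

end Eigenvector

section Droop

open scoped ComplexOrder

variable {ι 𝕜 : Type*} [DecidableEq ι] [RCLike 𝕜] {Yc : Matrix ι ι 𝕜} {g r : 𝕜}

theorem posDef_one_add_smul_smul_one_add (hYc : Yc.PosSemidef) (hr : 0 ≤ r)
    (hgr : 0 < 1 + g * r) : (1 + r • (g • (1 : Matrix ι ι 𝕜) + Yc)).PosDef := by
  have split : 1 + r • (g • (1 : Matrix ι ι 𝕜) + Yc) = (1 + g * r) • 1 + r • Yc := by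
    module
  rw [split]
  exact (PosDef.one.smul hgr).add_posSemidef (hYc.smul hr)

/-- Rated voltages `v` that drive no current through the branches form an eigenvector of the whole
conductance matrix, so the droop feedback acts on them as on a single node. -/
theorem droop_uniform_steady_state_current_general [Fintype ι] {v : ι → 𝕜}
    (hYc : Yc.PosSemidef) (hv : Yc *ᵥ v = 0) (hr : 0 ≤ r) (hgr : 0 < 1 + g * r) :
    IsUnit (1 + (g • 1 + Yc) * (r • 1)) ∧
      ((1 + (g • 1 + Yc) * (r • 1))⁻¹ * (g • 1 + Yc)) *ᵥ v = (g / (1 + g * r)) • v := by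
  have eigenvector : (g • 1 + Yc) *ᵥ v = g • v := by
    rw [add_mulVec, hv, smul_mulVec, one_mulVec, add_zero]
  have isUnit := (posDef_one_add_smul_smul_one_add hYc hr hgr).isUnit
  rw [Matrix.mul_smul, Matrix.mul_one]
  exact ⟨isUnit, inv_one_add_smul_mul_mulVec_of_mulVec_eq_smul isUnit eigenvector⟩

end Droop

/-- With uniform shunt conductance `g`, uniform droop resistance `r` and
common rated voltage `u_d·1ₙ`, the matrix `E + Y R` is invertible and the steady-state
current `(E + Y R)⁻¹ Y (u_d·1ₙ)` equals `(g/(1+gr))·u_d·1ₙ`. -/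
theorem droop_uniform_steady_state_current
    (n : ℕ) (hn : 0 < n)
    (Yc : Matrix (Fin n) (Fin n) ℝ) (hYc : Yc.PosSemidef)
    (hYc1 : Yc *ᵥ (fun _ => (1 : ℝ)) = 0)
    (g r u_d : ℝ) (hg : 0 ≤ g) (hr : 0 < r)
    (Y R : Matrix (Fin n) (Fin n) ℝ)
    (hY : Y = g • (1 : Matrix (Fin n) (Fin n) ℝ) + Yc)
    (hR : R = r • (1 : Matrix (Fin n) (Fin n) ℝ)) :
    IsUnit (1 + Y * R) ∧
      ((1 + Y * R)⁻¹ * Y) *ᵥ (fun _ => u_d) = fun _ => (g / (1 + g * r)) * u_d := by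
  subst hY hR
  have const_mem_ker : Yc *ᵥ (fun _ => u_d) = 0 := by
    simpa [hYc1, Pi.smul_def] using mulVec_smul Yc u_d (fun _ => (1 : ℝ))
  exact droop_uniform_steady_state_current_general hYc const_mem_ker hr.le (by positivity)
end

section
/- Let a_m, b_m, a_d, b_d, a_k, b_k be real numbers with (a_m, b_m) ≠ (0, 0). Then every root λ ∈ ℂ of the quadratic equation (a_m + i·b_m)λ² + (a_d + i·b_d)λ + (a_k + i·b_k) = 0 has strictly negative real part if and only if both of the following hold: (i) b_m b_d + a_m a_d > 0, and (ii) (a_d a_k + b_d b_k)(a_m a_d + b_m b_d) > (a_m b_k − b_m a_k)². -/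
open Complex

/-!
Factor the quadratic as `a (z - x) (z - y)`. In terms of the roots, the two Hurwitz quantities are
`-|a|² (Re x + Re y)` and `|a|⁴ Re x Re y |x + conj y|²`. Two real numbers are both negative exactly
when their sum is negative and their product positive, and the factor `|x + conj y|²` does not
affect signs because `Re (x + conj y) = Re x + Re y` is nonzero once the first quantity is positive.
-/

theorem exists_quadratic_vieta {K : Type*} [Field K] [IsAlgClosed K] {a : K} (ha : a ≠ 0)
    (b c : K) : ∃ x y : K, b = -(a * (x + y)) ∧ c = a * (x * y) := by
  obtain ⟨x, hroot⟩ := IsAlgClosed.exists_root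
    (Polynomial.C a * Polynomial.X ^ 2 + Polynomial.C b * Polynomial.X + Polynomial.C c)
    (by rw [Polynomial.degree_quadratic ha]; exact two_ne_zero)
  have hx : a * x ^ 2 + b * x + c = 0 := by simpa using hroot
  refine ⟨x, -b / a - x, ?_, ?_⟩
  · field_simp
    ring
  · field_simp
    linear_combination hx

theorem quadratic_eq_zero_iff_of_vieta {R : Type*} [CommRing R] [NoZeroDivisors R]
    {a b c x y : R} (ha : a ≠ 0) (hb : b = -(a * (x + y))) (hc : c = a * (x * y)) (z : R) :
    a * z ^ 2 + b * z + c = 0 ↔ z = x ∨ z = y := by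
  have factorization : a * z ^ 2 + b * z + c = a * ((z - x) * (z - y)) := by
    rw [hb, hc]
    ring
  simp only [factorization, mul_eq_zero, ha, false_or, sub_eq_zero]

theorem neg_and_neg_iff_add_neg_and_mul_pos {R : Type*} [Ring R] [LinearOrder R]
    [IsStrictOrderedRing R] {p q : R} : p < 0 ∧ q < 0 ↔ p + q < 0 ∧ 0 < p * q := by
  constructor
  · rintro ⟨hp, hq⟩
    exact ⟨add_neg hp hq, mul_pos_of_neg_of_neg hp hq⟩
  · rintro ⟨hsum, hprod⟩
    exact (mul_pos_iff.mp hprod).resolve_left fun ⟨hp, hq⟩ => (add_pos hp hq).not_gt hsum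

section ComplexRoots

open scoped ComplexConjugate

theorem re_conj_mul_eq_of_vieta {a b x y : ℂ} (hb : b = -(a * (x + y))) :
    (conj a * b).re = normSq a * -(x.re + y.re) := by
  subst hb
  simp only [normSq_apply, mul_re, mul_im, neg_re, neg_im, add_re, add_im, conj_re, conj_im]
  ring

theorem hurwitz_determinant_eq_of_vieta {a b c x y : ℂ} (hb : b = -(a * (x + y)))
    (hc : c = a * (x * y)) :
    (conj b * c).re * (conj a * b).re - (conj a * c).im ^ 2 =
      normSq a ^ 2 * (x.re * y.re * normSq (x + conj y)) := by
  subst hb hc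
  simp only [normSq_apply, mul_re, mul_im, neg_re, neg_im, add_re, add_im, conj_re, conj_im]
  ring

theorem normSq_add_conj_pos {x y : ℂ} (h : x.re + y.re ≠ 0) : 0 < normSq (x + conj y) :=
  normSq_pos.mpr fun h0 => h <| by simpa using congrArg re h0

theorem forall_quadratic_root_re_neg_iff {a : ℂ} (ha : a ≠ 0) (b c : ℂ) :
    (∀ z : ℂ, a * z ^ 2 + b * z + c = 0 → z.re < 0) ↔
      0 < (conj a * b).re ∧ (conj a * c).im ^ 2 < (conj b * c).re * (conj a * b).re := by
  obtain ⟨x, y, hb, hc⟩ := exists_quadratic_vieta ha b c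
  have ha_pos : 0 < normSq a := normSq_pos.mpr ha
  have roots_iff : (∀ z : ℂ, a * z ^ 2 + b * z + c = 0 → z.re < 0) ↔ x.re < 0 ∧ y.re < 0 := by
    simp only [quadratic_eq_zero_iff_of_vieta ha hb hc, forall_eq_or_imp, forall_eq]
  have sum_iff : 0 < (conj a * b).re ↔ x.re + y.re < 0 := by
    rw [re_conj_mul_eq_of_vieta hb, mul_pos_iff_of_pos_left ha_pos, neg_pos]
  have prod_iff (hsum : x.re + y.re < 0) :
      (conj a * c).im ^ 2 < (conj b * c).re * (conj a * b).re ↔ 0 < x.re * y.re := by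
    rw [← sub_pos, hurwitz_determinant_eq_of_vieta hb hc,
      mul_pos_iff_of_pos_left (pow_pos ha_pos 2),
      mul_pos_iff_of_pos_right (normSq_add_conj_pos hsum.ne)]
  rw [roots_iff, sum_iff, neg_and_neg_iff_add_neg_and_mul_pos]
  exact and_congr_right fun hsum => (prod_iff hsum).symm

end ComplexRoots

/-- Routh–Hurwitz-type criterion for a scalar quadratic with complex
coefficients: every root of `(a_m + i b_m)λ² + (a_d + i b_d)λ + (a_k + i b_k) = 0` has
strictly negative real part iff `b_m b_d + a_m a_d > 0` and
`(a_d a_k + b_d b_k)(a_m a_d + b_m b_d) > (a_m b_k − b_m a_k)²`. -/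
theorem quadratic_complex_roots_negative_real_part
    (a_m b_m a_d b_d a_k b_k : ℝ) (h : ¬(a_m = 0 ∧ b_m = 0)) :
    (∀ lam : ℂ,
        ((a_m : ℂ) + (b_m : ℂ) * Complex.I) * lam ^ 2
          + ((a_d : ℂ) + (b_d : ℂ) * Complex.I) * lam
          + ((a_k : ℂ) + (b_k : ℂ) * Complex.I) = 0 → lam.re < 0)
    ↔ (b_m * b_d + a_m * a_d > 0 ∧
        (a_d * a_k + b_d * b_k) * (a_m * a_d + b_m * b_d)
          > (a_m * b_k - b_m * a_k) ^ 2) := by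
  have ha : (a_m : ℂ) + b_m * I ≠ 0 := fun h0 =>
    h ⟨by simpa using congrArg re h0, by simpa using congrArg im h0⟩
  rw [forall_quadratic_root_re_neg_iff ha]
  simp [add_comm, sub_eq_add_neg]
end

section
/- Let n ≥ 2. Let Y_c and L be real symmetric n×n matrices with nonpositive off-diagonal entries and zero row sums (weighted graph Laplacians), each of rank n−1 (connected graphs). Let Y_s = diag(G_11,…,G_nn) with G_ii ≥ 0 and Y_s ≠ 0, set Y = Y_s + Y_c, and assume moreover that Y⁻¹ has entrywise nonnegative entries. Let D, R, Υ, Ψ be diagonal matrices with strictly positive diagonal entries and Φ a diagonal matrix with nonnegative diagonal entries. Then the closed-loop matrix A_c satisfies rank(A_c) = 2n − 1 and rank(A_c²) = 2n − 1; that is, 0 is a semisimple eigenvalue of A_c of algebraic multiplicity one. -/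
open Matrix

/-!
Row reduction turns `A_c` into `[[-D⁻¹(1 + YR), D⁻¹Y], [-ΨLΥ⁻¹, 0]]`, whose upper right block is
invertible, so `rank A_c = n + rank L = 2n - 1`. If `L u = 0` and `ℓ L = 0`, then the kernel of
`A_c` contains `(Υu, (Y⁻¹ + R)Υu)`, its left kernel contains `(ℓΨ⁻¹ΦLΥ⁻¹, ℓΨ⁻¹)`, and these two
vectors pair to `ℓΨ⁻¹ · (Y⁻¹ + R)Υu`. For `u = 1` and `0 ≠ ℓ ≥ 0` this number is positive, because
an invertible nonnegative matrix such as `Y⁻¹` maps positive vectors to positive vectors. A left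
and a right null vector that are not orthogonal force the one-dimensional kernel of `A_c` to meet
its range trivially, so squaring does not lower the rank.
-/

section Rank

theorem finrank_submodule_prod {K V W : Type*} [DivisionRing K] [AddCommGroup V] [Module K V]
    [AddCommGroup W] [Module K W] (p : Submodule K V) (q : Submodule K W)
    [FiniteDimensional K p] [FiniteDimensional K q] :
    Module.finrank K (p.prod q) = Module.finrank K p + Module.finrank K q := by
  have range_eq : LinearMap.range (p.subtype.prodMap q.subtype) = p.prod q := by
    rw [LinearMap.range_prodMap, Submodule.range_subtype, Submodule.range_subtype]
  rw [← range_eq, LinearMap.finrank_range_of_inj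
    (Function.Injective.prodMap p.subtype_injective q.subtype_injective), Module.finrank_prod]

variable {K l m n o : Type*} [Field K] [Fintype n]

theorem rank_eq_rank_of_ker_mulVecLin_eq {M : Matrix l n K} {N : Matrix m n K}
    (h : LinearMap.ker M.mulVecLin = LinearMap.ker N.mulVecLin) : M.rank = N.rank := by
  have rank_nullity_M := M.mulVecLin.finrank_range_add_finrank_ker
  have rank_nullity_N := N.mulVecLin.finrank_range_add_finrank_ker
  rw [h] at rank_nullity_M
  exact Nat.add_right_cancel (rank_nullity_M.trans rank_nullity_N.symm)

theorem exists_smul_eq_of_mulVec_eq_zero {M : Matrix l n K} (hM : M.rank + 1 = Fintype.card n)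
    {v : n → K} (hv : v ≠ 0) (hMv : M *ᵥ v = 0) {z : n → K} (hz : M *ᵥ z = 0) :
    ∃ c : K, c • v = z := by
  have finrank_ker : Module.finrank K (LinearMap.ker M.mulVecLin) = 1 := by
    have rank_nullity := M.mulVecLin.finrank_range_add_finrank_ker
    rw [Module.finrank_fintype_fun_eq_card, ← hM] at rank_nullity
    exact Nat.add_left_cancel rank_nullity
  have ker_generator_ne_zero : (⟨v, hMv⟩ : LinearMap.ker M.mulVecLin) ≠ 0 :=
    fun h => hv (congrArg Subtype.val h)
  obtain ⟨c, hc⟩ := (finrank_eq_one_iff_of_nonzero' _ ker_generator_ne_zero).1 finrank_ker ⟨z, hz⟩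
  exact ⟨c, congrArg Subtype.val hc⟩

theorem rank_mul_self_of_dotProduct_ne_zero {M : Matrix n n K} (hM : M.rank + 1 = Fintype.card n)
    {v w : n → K} (hMv : M *ᵥ v = 0) (hwM : w ᵥ* M = 0) (hwv : w ⬝ᵥ v ≠ 0) :
    (M * M).rank = M.rank := by
  have hv : v ≠ 0 := by
    rintro rfl
    exact hwv (dotProduct_zero w)
  refine rank_eq_rank_of_ker_mulVecLin_eq (le_antisymm (fun z hz => ?_) fun z hz => ?_)
  · rw [LinearMap.mem_ker, mulVecLin_apply, ← mulVec_mulVec] at hz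
    obtain ⟨c, hc⟩ := exists_smul_eq_of_mulVec_eq_zero hM hv hMv hz
    have c_mul_eq_zero : c * (w ⬝ᵥ v) = 0 := by
      rw [← smul_eq_mul, ← dotProduct_smul, hc, dotProduct_mulVec, hwM, zero_dotProduct]
    have hc0 : c = 0 := (mul_eq_zero.1 c_mul_eq_zero).resolve_right hwv
    rw [LinearMap.mem_ker, mulVecLin_apply, ← hc, hc0, zero_smul]
  · rw [LinearMap.mem_ker, mulVecLin_apply] at hz ⊢
    rw [← mulVec_mulVec, hz, mulVec_zero]

variable [Fintype m]

theorem rank_fromBlocks_zero₁₂_zero₂₁ (A : Matrix l m K) (D : Matrix o n K) :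
    (fromBlocks A 0 0 D).rank = A.rank + D.rank := by
  have toLin_eq : (fromBlocks A 0 0 D).mulVecLin =
      (LinearEquiv.sumArrowLequivProdArrow l o K K).symm.toLinearMap ∘ₗ
        A.mulVecLin.prodMap D.mulVecLin ∘ₗ
          (LinearEquiv.sumArrowLequivProdArrow m n K K).toLinearMap := by
    refine LinearMap.ext fun v => ?_
    rw [mulVecLin_apply, fromBlocks_mulVec, zero_mulVec, zero_mulVec, add_zero, zero_add]
    rfl
  rw [rank, toLin_eq, LinearMap.range_comp, LinearEquiv.finrank_map_eq, LinearEquiv.range_comp,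
    LinearMap.range_prodMap, finrank_submodule_prod, rank, rank]

theorem rank_fromBlocks_of_isUnit_det₁₁ [Finite l] [DecidableEq m] {A : Matrix m m K}
    (hA : IsUnit A.det) (B : Matrix m n K) (C : Matrix l m K) (D : Matrix l n K) :
    (fromBlocks A B C D).rank = Fintype.card m + (D - C * A⁻¹ * B).rank := by
  classical
  have := Fintype.ofFinite l
  have := A.invertibleOfIsUnitDet hA
  rw [fromBlocks_eq_of_invertible₁₁, invOf_eq_nonsing_inv,
    rank_mul_eq_left_of_isUnit_det _ _ (by simp), rank_mul_eq_right_of_isUnit_det _ _ (by simp),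
    rank_fromBlocks_zero₁₂_zero₂₁, rank_of_isUnit A ((isUnit_iff_isUnit_det A).2 hA)]

theorem rank_fromBlocks_of_isUnit_det₁₂ [Finite l] [DecidableEq m] {B : Matrix m m K}
    (hB : IsUnit B.det) (A : Matrix m n K) (C : Matrix l n K) (D : Matrix l m K) :
    (fromBlocks A B C D).rank = Fintype.card m + (C - D * B⁻¹ * A).rank := by
  have swap_columns :
      (fromBlocks A B C D).submatrix (Equiv.refl _) (Equiv.sumComm m n) = fromBlocks B A D C :=
    fromBlocks_submatrix_sum_swap_right A B C D id
  rw [← rank_fromBlocks_of_isUnit_det₁₁ hB, ← swap_columns, rank_submatrix]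

end Rank

section Positivity

variable {K m n : Type*}

theorem diagonal_apply_nonneg [DecidableEq n] [Zero K] [Preorder K] {v : n → K}
    (hv : ∀ i, 0 ≤ v i) (i j : n) : 0 ≤ diagonal v i j := by
  rw [diagonal_apply]
  split_ifs
  exacts [hv i, le_rfl]

variable [Fintype n]

theorem dotProduct_pos_of_nonneg_of_ne_zero [Semiring K] [PartialOrder K] [IsStrictOrderedRing K]
    {a v : n → K} (ha : ∀ i, 0 ≤ a i) (ha0 : a ≠ 0) (hv : ∀ i, 0 < v i) : 0 < a ⬝ᵥ v := by
  obtain ⟨i, hi⟩ := Function.ne_iff.1 ha0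
  exact Finset.sum_pos' (fun j _ => mul_nonneg (ha j) (hv j).le)
    ⟨i, Finset.mem_univ i, mul_pos ((ha i).lt_of_ne' hi) (hv i)⟩

theorem mulVec_nonneg_of_nonneg [Semiring K] [PartialOrder K] [IsOrderedRing K]
    {M : Matrix m n K} (hM : ∀ i j, 0 ≤ M i j) {v : n → K} (hv : ∀ i, 0 ≤ v i) (i : m) :
    0 ≤ (M *ᵥ v) i :=
  Finset.sum_nonneg fun j _ => mul_nonneg (hM i j) (hv j)

theorem mulVec_pos_of_nonneg_of_isUnit_det [DecidableEq n] [CommRing K] [PartialOrder K]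
    [IsStrictOrderedRing K] {M : Matrix n n K} (hM : ∀ i j, 0 ≤ M i j) (hMdet : IsUnit M.det)
    {v : n → K} (hv : ∀ i, 0 < v i) (i : n) : 0 < (M *ᵥ v) i :=
  dotProduct_pos_of_nonneg_of_ne_zero (hM i)
    (fun h => hMdet.ne_zero (det_eq_zero_of_row_eq_zero i (congrFun h))) hv

variable [Field K] [LinearOrder K] [IsStrictOrderedRing K]

theorem isUnit_det_diagonal_of_pos [DecidableEq n] {v : n → K} (hv : ∀ i, 0 < v i) :
    IsUnit (diagonal v).det := by
  rw [det_diagonal]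
  exact (Finset.prod_pos fun i _ => hv i).ne'.isUnit

theorem inv_diagonal_mulVec_pos [DecidableEq n] {v w : n → K} (hv : ∀ i, 0 < v i)
    (hw : ∀ i, 0 < w i) (i : n) : 0 < ((diagonal v)⁻¹ *ᵥ w) i := by
  have inv_eq : (diagonal v)⁻¹ = diagonal fun i => (v i)⁻¹ := inv_eq_right_inv <| by
    simp only [diagonal_mul_diagonal, mul_inv_cancel₀ (hv _).ne', diagonal_one]
  rw [inv_eq, mulVec_diagonal]
  exact mul_pos (inv_pos.2 (hv i)) (hw i)

end Positivity

section ClosedLoop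

variable {n : Type*} [Fintype n] [DecidableEq n]

section CommRing

variable {K : Type*} [CommRing K]

/-- The closed-loop matrix `A_c` of the DC microgrid under distributed cooperative droop control,
with arbitrary square matrices over a commutative ring as parameters. The inverses of singular `D`
and `Υ` are the junk value `0`. -/
noncomputable def closedLoopMatrix (D R Y Υ Ψ Φ L : Matrix n n K) : Matrix (n ⊕ n) (n ⊕ n) K :=
  fromBlocks
    (-(D⁻¹ * (1 + Y * R))) (D⁻¹ * Y)
    (-(Ψ * L * Υ⁻¹) + Φ * L * Υ⁻¹ * D⁻¹ * (1 + Y * R)) (-(Φ * L * Υ⁻¹ * D⁻¹ * Y))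

/-- The vector of the kernel of `closedLoopMatrix` attached to a vector `u` with `L *ᵥ u = 0`. -/
noncomputable def closedLoopKerVec (R Y Υ : Matrix n n K) (u : n → K) : n ⊕ n → K :=
  Sum.elim (Υ *ᵥ u) ((Y⁻¹ + R) *ᵥ (Υ *ᵥ u))

/-- The vector of the left kernel of `closedLoopMatrix` attached to a vector `ℓ` with
`ℓ ᵥ* L = 0`. -/
noncomputable def closedLoopLeftKerVec (Υ Ψ Φ L : Matrix n n K) (ℓ : n → K) : n ⊕ n → K :=
  Sum.elim ((ℓ ᵥ* Ψ⁻¹) ᵥ* (Φ * L * Υ⁻¹)) (ℓ ᵥ* Ψ⁻¹)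

theorem closedLoopMatrix_eq_mul (D R Y Υ Ψ Φ L : Matrix n n K) :
    closedLoopMatrix D R Y Υ Ψ Φ L =
      fromBlocks 1 0 (-(Φ * L * Υ⁻¹)) 1 *
        fromBlocks (-(D⁻¹ * (1 + Y * R))) (D⁻¹ * Y) (-(Ψ * L * Υ⁻¹)) 0 := by
  rw [closedLoopMatrix, fromBlocks_multiply]
  simp only [Matrix.one_mul, Matrix.zero_mul, Matrix.mul_zero, add_zero, neg_zero, Matrix.neg_mul,
    Matrix.mul_neg, neg_neg, Matrix.mul_assoc, add_comm (Φ * _)]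

theorem closedLoopMatrix_mulVec_closedLoopKerVec {Y Υ L : Matrix n n K} (hY : IsUnit Y.det)
    (hΥ : IsUnit Υ.det) (D R Ψ Φ : Matrix n n K) {u : n → K} (hu : L *ᵥ u = 0) :
    closedLoopMatrix D R Y Υ Ψ Φ L *ᵥ closedLoopKerVec R Y Υ u = 0 := by
  have upper_block : (D⁻¹ * Y) *ᵥ ((Y⁻¹ + R) *ᵥ (Υ *ᵥ u)) =
      (D⁻¹ * (1 + Y * R)) *ᵥ (Υ *ᵥ u) := by
    rw [mulVec_mulVec _ (D⁻¹ * Y), Matrix.mul_assoc, Matrix.mul_add, mul_nonsing_inv Y hY]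
  have lower_block : (Ψ * L * Υ⁻¹) *ᵥ (Υ *ᵥ u) = 0 := by
    rw [mulVec_mulVec, nonsing_inv_mul_cancel_right _ _ hΥ, ← mulVec_mulVec, hu, mulVec_zero]
  have factor_mulVec : fromBlocks (-(D⁻¹ * (1 + Y * R))) (D⁻¹ * Y) (-(Ψ * L * Υ⁻¹)) 0 *ᵥ
      closedLoopKerVec R Y Υ u = 0 := by
    rw [closedLoopKerVec, fromBlocks_mulVec]
    simp only [Sum.elim_comp_inl, Sum.elim_comp_inr, neg_mulVec, upper_block, lower_block,
      neg_add_cancel, zero_mulVec, neg_zero, add_zero, Sum.elim_zero_zero]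
  rw [closedLoopMatrix_eq_mul, ← mulVec_mulVec, factor_mulVec, mulVec_zero]

theorem closedLoopLeftKerVec_vecMul_closedLoopMatrix {Ψ L : Matrix n n K} (hΨ : IsUnit Ψ.det)
    (D R Y Υ Φ : Matrix n n K) {ℓ : n → K} (hℓ : ℓ ᵥ* L = 0) :
    closedLoopLeftKerVec Υ Ψ Φ L ℓ ᵥ* closedLoopMatrix D R Y Υ Ψ Φ L = 0 := by
  have row_reduction : closedLoopLeftKerVec Υ Ψ Φ L ℓ ᵥ* fromBlocks 1 0 (-(Φ * L * Υ⁻¹)) 1 =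
      Sum.elim (0 : n → K) (ℓ ᵥ* Ψ⁻¹) := by
    rw [closedLoopLeftKerVec, vecMul_fromBlocks]
    simp only [Sum.elim_comp_inl, Sum.elim_comp_inr, vecMul_one, vecMul_zero, vecMul_neg,
      add_neg_cancel, zero_add]
  have vecMul_ΨL : (ℓ ᵥ* Ψ⁻¹) ᵥ* (Ψ * L * Υ⁻¹) = 0 := by
    rw [vecMul_vecMul, Matrix.mul_assoc Ψ, nonsing_inv_mul_cancel_left _ _ hΨ, ← vecMul_vecMul, hℓ,
      zero_vecMul]
  rw [closedLoopMatrix_eq_mul, ← vecMul_vecMul, row_reduction, vecMul_fromBlocks]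
  simp only [Sum.elim_comp_inl, Sum.elim_comp_inr, zero_vecMul, vecMul_zero, vecMul_neg, vecMul_ΨL,
    neg_zero, add_zero, Sum.elim_zero_zero]

theorem closedLoopLeftKerVec_dotProduct_closedLoopKerVec {Υ L : Matrix n n K} (hΥ : IsUnit Υ.det)
    (R Y Ψ Φ : Matrix n n K) {u : n → K} (hu : L *ᵥ u = 0) (ℓ : n → K) :
    closedLoopLeftKerVec Υ Ψ Φ L ℓ ⬝ᵥ closedLoopKerVec R Y Υ u =
      ℓ ᵥ* Ψ⁻¹ ⬝ᵥ (Y⁻¹ + R) *ᵥ (Υ *ᵥ u) := by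
  rw [closedLoopLeftKerVec, closedLoopKerVec, sumElim_dotProduct_sumElim, ← dotProduct_mulVec,
    mulVec_mulVec u, nonsing_inv_mul_cancel_right _ _ hΥ, ← mulVec_mulVec, hu, mulVec_zero,
    dotProduct_zero, zero_add]

end CommRing

theorem rank_closedLoopMatrix {K : Type*} [Field K] {D Y Υ Ψ : Matrix n n K} (hD : IsUnit D.det)
    (hY : IsUnit Y.det) (hΥ : IsUnit Υ.det) (hΨ : IsUnit Ψ.det) (R Φ L : Matrix n n K) :
    (closedLoopMatrix D R Y Υ Ψ Φ L).rank = Fintype.card n + L.rank := by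
  have isUnit_det_D_inv_mul_Y : IsUnit (D⁻¹ * Y).det := by
    rw [det_mul]
    exact (isUnit_nonsing_inv_det D hD).mul hY
  rw [closedLoopMatrix_eq_mul, rank_mul_eq_right_of_isUnit_det _ _ (by simp),
    rank_fromBlocks_of_isUnit_det₁₂ isUnit_det_D_inv_mul_Y, Matrix.zero_mul, Matrix.zero_mul,
    sub_zero, ← Matrix.neg_mul, ← Matrix.neg_mul,
    rank_mul_eq_left_of_isUnit_det _ _ (isUnit_nonsing_inv_det Υ hΥ),
    rank_mul_eq_right_of_isUnit_det _ _ (by simpa [det_neg] using hΨ)]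

theorem closedLoop_rank_shunt_general {K : Type*} [Field K] [LinearOrder K] [IsStrictOrderedRing K]
    {D Y R L : Matrix n n K} (Φ : Matrix n n K) (hD : IsUnit D.det) (hY : IsUnit Y.det)
    (hYinv : ∀ i j, 0 ≤ Y⁻¹ i j) (hR : ∀ i j, 0 ≤ R i j)
    (hLrank : L.rank + 1 = Fintype.card n) (hLrow : L *ᵥ 1 = 0)
    {ℓ : n → K} (hℓ : ∀ i, 0 ≤ ℓ i) (hℓ0 : ℓ ≠ 0) (hℓL : ℓ ᵥ* L = 0)
    {υ ψ : n → K} (hυ : ∀ i, 0 < υ i) (hψ : ∀ i, 0 < ψ i) :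
    let A := closedLoopMatrix D R Y (diagonal υ) (diagonal ψ) Φ L
    A.rank = 2 * Fintype.card n - 1 ∧ (A * A).rank = 2 * Fintype.card n - 1 := by
  intro A
  have diagonal_mulVec_one : diagonal υ *ᵥ 1 = υ := funext fun i => by
    rw [mulVec_diagonal, Pi.one_apply, mul_one]
  have hΥ := isUnit_det_diagonal_of_pos hυ
  have hΨ := isUnit_det_diagonal_of_pos hψ
  have rank_A : A.rank + 1 = 2 * Fintype.card n := by
    rw [rank_closedLoopMatrix hD hY hΥ hΨ, add_assoc, hLrank, two_mul]
  have voltage_pos : ∀ i, 0 < ((Y⁻¹ + R) *ᵥ υ) i := fun i => by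
    rw [add_mulVec]
    exact add_pos_of_pos_of_nonneg
      (mulVec_pos_of_nonneg_of_isUnit_det hYinv (isUnit_nonsing_inv_det Y hY) hυ i)
      (mulVec_nonneg_of_nonneg hR (fun j => (hυ j).le) i)
  have pairing_pos : 0 < closedLoopLeftKerVec (diagonal υ) (diagonal ψ) Φ L ℓ ⬝ᵥ
      closedLoopKerVec R Y (diagonal υ) 1 := by
    rw [closedLoopLeftKerVec_dotProduct_closedLoopKerVec hΥ R Y _ Φ hLrow, diagonal_mulVec_one,
      ← dotProduct_mulVec]
    exact dotProduct_pos_of_nonneg_of_ne_zero hℓ hℓ0 (inv_diagonal_mulVec_pos hψ voltage_pos)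
  have rank_A_mul_A : (A * A).rank = A.rank :=
    rank_mul_self_of_dotProduct_ne_zero (by rw [rank_A, Fintype.card_sum, two_mul])
      (closedLoopMatrix_mulVec_closedLoopKerVec hY hΥ D R _ Φ hLrow)
      (closedLoopLeftKerVec_vecMul_closedLoopMatrix hΨ D R Y _ Φ hℓL) pairing_pos.ne'
  rw [rank_A_mul_A]
  exact ⟨Nat.eq_sub_of_add_eq rank_A, Nat.eq_sub_of_add_eq rank_A⟩

end ClosedLoop

/-- When at least one shunt conductance is present (`Y_s ≠ 0`), the
closed-loop matrix `A_c` of the distributed cooperative droop control has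
`rank(A_c) = rank(A_c²) = 2n − 1`, so `0` is a semisimple eigenvalue of algebraic
multiplicity one. -/
theorem closedLoop_rank_shunt
    (n : ℕ) (hn : 2 ≤ n)
    (Yc L : Matrix (Fin n) (Fin n) ℝ)
    (hYcsym : Yc.IsSymm) (hLsym : L.IsSymm)
    (hYcoff : ∀ i j, i ≠ j → Yc i j ≤ 0) (hLoff : ∀ i j, i ≠ j → L i j ≤ 0)
    (hYcrow : ∀ i, ∑ j, Yc i j = 0) (hLrow : ∀ i, ∑ j, L i j = 0)
    (hYcrank : Yc.rank = n - 1) (hLrank : L.rank = n - 1)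
    (G : Fin n → ℝ) (hG : ∀ i, 0 ≤ G i)
    (Ys : Matrix (Fin n) (Fin n) ℝ) (hYs : Ys = Matrix.diagonal G) (hYsne : Ys ≠ 0)
    (Y : Matrix (Fin n) (Fin n) ℝ) (hY : Y = Ys + Yc)
    (hYunit : IsUnit Y.det) (hYinvnn : ∀ i j, 0 ≤ Y⁻¹ i j)
    (d r υ ψv φv : Fin n → ℝ)
    (hd : ∀ i, 0 < d i) (hr : ∀ i, 0 < r i) (hυ : ∀ i, 0 < υ i)
    (hψ : ∀ i, 0 < ψv i) (hφ : ∀ i, 0 ≤ φv i)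
    (D R Υ Ψ Φ : Matrix (Fin n) (Fin n) ℝ)
    (hD : D = Matrix.diagonal d) (hR : R = Matrix.diagonal r)
    (hΥ : Υ = Matrix.diagonal υ) (hΨ : Ψ = Matrix.diagonal ψv)
    (hΦ : Φ = Matrix.diagonal φv)
    (A_c : Matrix (Fin n ⊕ Fin n) (Fin n ⊕ Fin n) ℝ)
    (hA : A_c = Matrix.fromBlocks
      (-(D⁻¹ * (1 + Y * R))) (D⁻¹ * Y)
      (-(Ψ * L * Υ⁻¹) + Φ * L * Υ⁻¹ * D⁻¹ * (1 + Y * R)) (-(Φ * L * Υ⁻¹ * D⁻¹ * Y))) :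
    A_c.rank = 2 * n - 1 ∧ (A_c * A_c).rank = 2 * n - 1 := by
  subst hD hR hΥ hΨ hΦ hA
  have : NeZero n := ⟨by omega⟩
  have hLone : L *ᵥ 1 = 0 := funext fun i => by
    rw [mulVec, dotProduct_one, hLrow, Pi.zero_apply]
  have honeL : 1 ᵥ* L = 0 := by rw [← mulVec_transpose, hLsym.eq, hLone]
  simpa only [closedLoopMatrix, Fintype.card_fin] using closedLoop_rank_shunt_general (diagonal φv)
    (isUnit_det_diagonal_of_pos hd) hYunit hYinvnn (diagonal_apply_nonneg fun i => (hr i).le)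
    (by rw [hLrank, Fintype.card_fin]; omega) hLone (fun _ => zero_le_one) one_ne_zero honeL hυ hψ
end

section
/- Let n ≥ 1, let Y be a real symmetric positive definite n×n matrix whose inverse Y⁻¹ is entrywise nonnegative, let R, Ψ, Υ be real diagonal matrices with strictly positive diagonals, and let Uᵈ(0) ∈ ℝⁿ. Define the decentralized steady current-ratio vector R^Dec = Υ⁻¹(E + YR)⁻¹Y·Uᵈ(0) and the cooperative steady current ratio r_{c1} = [1ₙᵀΨ⁻¹Uᵈ(0)] / [1ₙᵀΨ⁻¹(Y⁻¹+R)Υ·1ₙ]. Then min_j (R^Dec)_j ≤ r_{c1} ≤ max_j (R^Dec)_j; moreover, if (R^Dec)_j < 1 for every j, then r_{c1} < 1. -/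
open Matrix

/-!
Put `A = (Y⁻¹ + R) Υ`. Then `R^Dec = A⁻¹ Uᵈ(0)`, so `Uᵈ(0) = A R^Dec`, and substituting this into
`r_{c1}` exhibits it as the mean of the components of `R^Dec` with weights `(1ᵀ Ψ⁻¹ A)_j`. These
weights are positive, because a nonnegative invertible matrix has no zero column.
-/

section CommRing

variable {ι α : Type*} [Fintype ι] [DecidableEq ι] [CommRing α] {Y : Matrix ι ι α}

lemma inv_add_eq_inv_mul_one_add_mul (hY : IsUnit Y) (R : Matrix ι ι α) :
    Y⁻¹ + R = Y⁻¹ * (1 + Y * R) := by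
  rw [mul_add, mul_one, nonsing_inv_mul_cancel_left _ _ ((isUnit_iff_isUnit_det Y).1 hY)]

lemma isUnit_inv_add_iff (hY : IsUnit Y) (R : Matrix ι ι α) :
    IsUnit (Y⁻¹ + R) ↔ IsUnit (1 + Y * R) := by
  rw [inv_add_eq_inv_mul_one_add_mul hY]
  exact (isUnit_nonsing_inv_iff.2 hY).mul_left_iff

lemma inv_inv_add_mul (hY : IsUnit Y) (R Υ : Matrix ι ι α) :
    ((Y⁻¹ + R) * Υ)⁻¹ = Υ⁻¹ * ((1 + Y * R)⁻¹ * Y) := by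
  rw [inv_add_eq_inv_mul_one_add_mul hY, Matrix.mul_inv_rev, Matrix.mul_inv_rev,
    nonsing_inv_nonsing_inv _ ((isUnit_iff_isUnit_det Y).1 hY)]

end CommRing

lemma isUnit_one_add_mul_of_posDef_of_posSemidef {ι 𝕜 : Type*} [Fintype ι] [DecidableEq ι]
    [Field 𝕜] [PartialOrder 𝕜] [StarRing 𝕜] [AddLeftMono 𝕜] {Y R : Matrix ι ι 𝕜}
    (hY : Y.PosDef) (hR : R.PosSemidef) :
    IsUnit (1 + Y * R) :=
  (isUnit_inv_add_iff hY.isUnit R).1 (hY.inv.add_posSemidef hR).isUnit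

lemma mul_apply_nonneg {l m n α : Type*} [Fintype m] [Semiring α] [PartialOrder α]
    [IsOrderedRing α] {A : Matrix l m α} {B : Matrix m n α} (hA : ∀ i j, 0 ≤ A i j)
    (hB : ∀ i j, 0 ≤ B i j) (i : l) (j : n) : 0 ≤ (A * B) i j :=
  Finset.sum_nonneg fun k _ => mul_nonneg (hA i k) (hB k j)

lemma diagonal_apply_nonneg_s12 {ι α : Type*} [DecidableEq ι] [Zero α] [Preorder α] {d : ι → α}
    (hd : ∀ i, 0 ≤ d i) (i j : ι) : 0 ≤ diagonal d i j := by
  rw [diagonal_apply]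
  split_ifs
  exacts [hd i, le_rfl]

section Field

variable {ι 𝕜 : Type*} [Fintype ι] [DecidableEq ι] [Field 𝕜]

lemma dotProduct_div_dotProduct_mulVec_one_eq_centerMass {A : Matrix ι ι 𝕜} (hA : IsUnit A)
    (p u : ι → 𝕜) :
    p ⬝ᵥ u / p ⬝ᵥ (A *ᵥ 1) = Finset.univ.centerMass (p ᵥ* A) (A⁻¹ *ᵥ u) := by
  have hu : u = A *ᵥ (A⁻¹ *ᵥ u) := by
    rw [mulVec_mulVec, mul_nonsing_inv _ ((isUnit_iff_isUnit_det A).1 hA), one_mulVec]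
  calc p ⬝ᵥ u / p ⬝ᵥ (A *ᵥ 1)
      = (p ᵥ* A) ⬝ᵥ (A⁻¹ *ᵥ u) / (p ᵥ* A) ⬝ᵥ 1 := by
        rw [← dotProduct_mulVec, ← dotProduct_mulVec, ← hu]
    _ = Finset.univ.centerMass (p ᵥ* A) (A⁻¹ *ᵥ u) := by
        rw [dotProduct_one, div_eq_inv_mul]
        rfl

variable [LinearOrder 𝕜] [IsStrictOrderedRing 𝕜]

lemma inv_diagonal_apply_nonneg {d : ι → 𝕜} (hd : ∀ i, 0 < d i) (i j : ι) :
    0 ≤ (diagonal d)⁻¹ i j := by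
  have h_inv : (diagonal d)⁻¹ = diagonal d⁻¹ := by
    apply inv_eq_right_inv
    simp [diagonal_mul_diagonal, (hd _).ne']
  rw [h_inv]
  exact diagonal_apply_nonneg_s12 (fun k => (inv_pos.2 (hd k)).le) i j

lemma vecMul_pos_of_isUnit_of_nonneg {A : Matrix ι ι 𝕜} (hA : IsUnit A) (hA₀ : ∀ i j, 0 ≤ A i j)
    {p : ι → 𝕜} (hp : ∀ i, 0 < p i) (j : ι) : 0 < (p ᵥ* A) j := by
  obtain ⟨i, hi⟩ : ∃ i, A i j ≠ 0 := by
    by_contra! h_col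
    exact ((isUnit_iff_isUnit_det A).1 hA).ne_zero (det_eq_zero_of_column_eq_zero j h_col)
  exact Finset.sum_pos' (fun k _ => mul_nonneg (hp k).le (hA₀ k j))
    ⟨i, Finset.mem_univ i, mul_pos (hp i) ((hA₀ i j).lt_of_ne' hi)⟩

lemma inf'_le_dotProduct_div_and_le_sup' [Nonempty ι] {A : Matrix ι ι 𝕜} (hA : IsUnit A)
    (hA₀ : ∀ i j, 0 ≤ A i j) {p : ι → 𝕜} (hp : ∀ i, 0 < p i) (u : ι → 𝕜) :
    Finset.univ.inf' Finset.univ_nonempty (A⁻¹ *ᵥ u) ≤ p ⬝ᵥ u / p ⬝ᵥ (A *ᵥ 1) ∧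
      p ⬝ᵥ u / p ⬝ᵥ (A *ᵥ 1) ≤ Finset.univ.sup' Finset.univ_nonempty (A⁻¹ *ᵥ u) := by
  have h_weight : ∀ j, 0 < (p ᵥ* A) j := vecMul_pos_of_isUnit_of_nonneg hA hA₀ hp
  have h_total : 0 < ∑ j, (p ᵥ* A) j :=
    Finset.sum_pos (fun j _ => h_weight j) Finset.univ_nonempty
  rw [dotProduct_div_dotProduct_mulVec_one_eq_centerMass hA]
  exact ⟨Finset.inf_le_centerMass (fun j _ => (h_weight j).le) h_total,
    Finset.centerMass_le_sup (fun j _ => (h_weight j).le) h_total⟩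

end Field

section Microgrid

variable {ι 𝕜 : Type*} [Fintype ι] [DecidableEq ι] [Field 𝕜]

/-- The steady current-ratio vector `R^Dec` of decentralized droop control with conductance
matrix `Y`, droop resistance matrix `R`, maximal-current matrix `Υ` and rated voltage `u`. Its value
is meaningful only when `Υ` and `1 + Y * R` are invertible. -/
noncomputable def decentralizedRatio (Y R Υ : Matrix ι ι 𝕜) (u : ι → 𝕜) : ι → 𝕜 :=
  (Υ⁻¹ * ((1 + Y * R)⁻¹ * Y)) *ᵥ u

/-- The common steady current ratio `r_{c1}` of distributed cooperative droop control with integral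
gain matrix `Ψ`, started from zero current. Its value is meaningful only when `Y` and `Ψ` are
invertible and the denominator is nonzero. -/
noncomputable def cooperativeRatio (Y R Ψ Υ : Matrix ι ι 𝕜) (u : ι → 𝕜) : 𝕜 :=
  (1 ⬝ᵥ (Ψ⁻¹ *ᵥ u)) / (1 ⬝ᵥ (Ψ⁻¹ *ᵥ (((Y⁻¹ + R) * Υ) *ᵥ 1)))

theorem cooperative_ratio_between_decentralized_ratios_general [Nonempty ι] [LinearOrder 𝕜]
    [IsStrictOrderedRing 𝕜] {Y R Ψ Υ : Matrix ι ι 𝕜}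
    (hY : IsUnit Y) (hYR : IsUnit (1 + Y * R)) (hΨ : IsUnit Ψ) (hΥ : IsUnit Υ)
    (hY₀ : ∀ i j, 0 ≤ Y⁻¹ i j) (hR₀ : ∀ i j, 0 ≤ R i j)
    (hΨ₀ : ∀ i j, 0 ≤ Ψ⁻¹ i j) (hΥ₀ : ∀ i j, 0 ≤ Υ i j) (u : ι → 𝕜) :
    (Finset.univ.inf' Finset.univ_nonempty (decentralizedRatio Y R Υ u) ≤
        cooperativeRatio Y R Ψ Υ u ∧
      cooperativeRatio Y R Ψ Υ u ≤
        Finset.univ.sup' Finset.univ_nonempty (decentralizedRatio Y R Υ u)) ∧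
    ((∀ j, decentralizedRatio Y R Υ u j < 1) → cooperativeRatio Y R Ψ Υ u < 1) := by
  have hA : IsUnit ((Y⁻¹ + R) * Υ) := ((isUnit_inv_add_iff hY R).2 hYR).mul hΥ
  have hA₀ : ∀ i j, 0 ≤ ((Y⁻¹ + R) * Υ) i j :=
    mul_apply_nonneg (fun i j => add_nonneg (hY₀ i j) (hR₀ i j)) hΥ₀
  have hp : ∀ j, 0 < ((1 : ι → 𝕜) ᵥ* Ψ⁻¹) j :=
    vecMul_pos_of_isUnit_of_nonneg (isUnit_nonsing_inv_iff.2 hΨ) hΨ₀ fun _ => zero_lt_one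
  have h_bounds := inf'_le_dotProduct_div_and_le_sup' hA hA₀ hp u
  rw [inv_inv_add_mul hY, ← dotProduct_mulVec, ← dotProduct_mulVec] at h_bounds
  exact ⟨h_bounds, fun h_lt =>
    h_bounds.2.trans_lt ((Finset.sup'_lt_iff _).2 fun j _ => h_lt j)⟩

end Microgrid

/-- The cooperative steady current ratio `r_{c1}` lies between the
minimal and maximal components of the decentralized steady current-ratio vector `R^Dec`;
if every component of `R^Dec` is less than `1`, then `r_{c1} < 1`. -/
theorem cooperative_ratio_between_decentralized_ratios
    (n : ℕ) (hn : 0 < n)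
    (Y : Matrix (Fin n) (Fin n) ℝ) (hYsym : Y.IsSymm) (hYpd : Y.PosDef)
    (hYinvnn : ∀ i j, 0 ≤ Y⁻¹ i j)
    (r ψv υ : Fin n → ℝ)
    (hr : ∀ i, 0 < r i) (hψ : ∀ i, 0 < ψv i) (hυ : ∀ i, 0 < υ i)
    (R Ψ Υ : Matrix (Fin n) (Fin n) ℝ)
    (hR : R = Matrix.diagonal r) (hΨ : Ψ = Matrix.diagonal ψv)
    (hΥ : Υ = Matrix.diagonal υ)
    (Ud0 : Fin n → ℝ)
    (RDec : Fin n → ℝ)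
    (hRDec : RDec = (Υ⁻¹ * ((1 + Y * R)⁻¹ * Y)) *ᵥ Ud0)
    (rc1 : ℝ)
    (hrc1 : rc1 = ((fun _ => (1 : ℝ)) ⬝ᵥ (Ψ⁻¹ *ᵥ Ud0)) /
      ((fun _ => (1 : ℝ)) ⬝ᵥ (Ψ⁻¹ *ᵥ (((Y⁻¹ + R) * Υ) *ᵥ (fun _ => (1 : ℝ)))))) :
    (Finset.univ.inf' ⟨⟨0, hn⟩, Finset.mem_univ _⟩ RDec ≤ rc1 ∧
      rc1 ≤ Finset.univ.sup' ⟨⟨0, hn⟩, Finset.mem_univ _⟩ RDec) ∧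
    ((∀ j, RDec j < 1) → rc1 < 1) := by
  subst hR hΨ hΥ hRDec hrc1
  have : Nonempty (Fin n) := ⟨⟨0, hn⟩⟩
  exact cooperative_ratio_between_decentralized_ratios_general hYpd.isUnit
    (isUnit_one_add_mul_of_posDef_of_posSemidef hYpd (PosDef.diagonal hr).posSemidef)
    (PosDef.diagonal hψ).isUnit (PosDef.diagonal hυ).isUnit hYinvnn
    (diagonal_apply_nonneg_s12 fun i => (hr i).le) (inv_diagonal_apply_nonneg hψ)
    (diagonal_apply_nonneg_s12 fun i => (hυ i).le) Ud0
end

section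
/- Let n ≥ 1, let Y be a real symmetric positive definite n×n matrix whose inverse Y⁻¹ is entrywise nonnegative, let R, Ψ, Υ be real diagonal matrices with strictly positive diagonals, and let Uᵈ(0) ∈ ℝⁿ. Define R^Dec = Υ⁻¹(E+YR)⁻¹Y·Uᵈ(0) and r_{c1} = 1ₙᵀΨ⁻¹Uᵈ(0) / 1ₙᵀΨ⁻¹(Y⁻¹+R)Υ·1ₙ, and suppose every component of R^Dec is strictly positive and r_{c1} ≥ 0. Let R̲ = min_j (R^Dec)_j and R̄ = max_j (R^Dec)_j, and define U^ss = Y⁻¹Υ·R^Dec (the decentralized steady voltage vector) and U = r_{c1}·Y⁻¹Υ·1ₙ (the cooperative steady voltage vector). Then componentwise (r_{c1}/R̄)·U^ss ≤ U ≤ (r_{c1}/R̲)·U^ss. -/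
open Matrix

/-!
Scaled by `c / max v` or `c / min v`, a positive vector `v` lies below or above the constant vector
`c • 1`; a matrix with nonnegative entries preserves both comparisons. Here `v` is the vector of
decentralized current ratios, `c` is the cooperative ratio and the matrix is `Y⁻¹ * Υ`.
-/

section OrderedSemiring

variable {m n K : Type*} [Fintype n] [Semiring K] [PartialOrder K] [IsOrderedRing K]

theorem monotone_mulVec_of_nonneg {M : Matrix m n K} (hM : ∀ i j, 0 ≤ M i j) :
    Monotone (M *ᵥ ·) :=
  fun _ _ hvw i ↦ dotProduct_le_dotProduct_of_nonneg_left hvw (hM i)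

theorem mul_diagonal_nonneg [DecidableEq n] {M : Matrix m n K} (hM : ∀ i j, 0 ≤ M i j)
    {d : n → K} (hd : 0 ≤ d) (i : m) (j : n) : 0 ≤ (M * diagonal d) i j := by
  rw [mul_diagonal]
  exact mul_nonneg (hM i j) (hd j)

end OrderedSemiring

section OrderedField

variable {m n K : Type*} [Fintype n] [Nonempty n] [Field K] [LinearOrder K] [IsStrictOrderedRing K]

theorem div_sup'_smul_le_smul_one {c : K} (hc : 0 ≤ c) {v : n → K} (hv : ∀ j, 0 < v j) :
    (c / Finset.univ.sup' Finset.univ_nonempty v) • v ≤ c • 1 := by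
  intro j
  have le_sup : v j ≤ Finset.univ.sup' Finset.univ_nonempty v :=
    Finset.le_sup' v (Finset.mem_univ j)
  have sup_pos : 0 < Finset.univ.sup' Finset.univ_nonempty v := (hv j).trans_le le_sup
  simpa [div_mul_eq_mul_div, div_le_iff₀ sup_pos] using mul_le_mul_of_nonneg_left le_sup hc

theorem smul_one_le_div_inf'_smul {c : K} (hc : 0 ≤ c) {v : n → K} (hv : ∀ j, 0 < v j) :
    c • 1 ≤ (c / Finset.univ.inf' Finset.univ_nonempty v) • v := by
  intro j
  have inf_le : Finset.univ.inf' Finset.univ_nonempty v ≤ v j :=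
    Finset.inf'_le v (Finset.mem_univ j)
  have inf_pos : 0 < Finset.univ.inf' Finset.univ_nonempty v :=
    (Finset.lt_inf'_iff _).2 fun k _ ↦ hv k
  simpa [div_mul_eq_mul_div, le_div_iff₀ inf_pos] using mul_le_mul_of_nonneg_left inf_le hc

theorem cooperative_voltage_between_decentralized_voltages_general
    {M : Matrix m n K} (hM : ∀ i j, 0 ≤ M i j) {c : K} (hc : 0 ≤ c)
    {v : n → K} (hv : ∀ j, 0 < v j) :
    (c / Finset.univ.sup' Finset.univ_nonempty v) • (M *ᵥ v) ≤ c • (M *ᵥ 1) ∧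
      c • (M *ᵥ 1) ≤ (c / Finset.univ.inf' Finset.univ_nonempty v) • (M *ᵥ v) := by
  simp only [← mulVec_smul]
  exact ⟨monotone_mulVec_of_nonneg hM (div_sup'_smul_le_smul_one hc hv),
    monotone_mulVec_of_nonneg hM (smul_one_le_div_inf'_smul hc hv)⟩

end OrderedField

/-- Componentwise bounds relating the cooperative steady voltage
`U = r_{c1}·Y⁻¹Υ1ₙ` and the decentralized steady voltage `U^ss = Y⁻¹Υ·R^Dec`:
`(r_{c1}/R̄)·U^ss ≤ U ≤ (r_{c1}/R̲)·U^ss`. -/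
theorem cooperative_voltage_between_decentralized_voltages
    (n : ℕ) (hn : 0 < n)
    (Y : Matrix (Fin n) (Fin n) ℝ) (hYsym : Y.IsSymm) (hYpd : Y.PosDef)
    (hYinvnn : ∀ i j, 0 ≤ Y⁻¹ i j)
    (r ψv υ : Fin n → ℝ)
    (hr : ∀ i, 0 < r i) (hψ : ∀ i, 0 < ψv i) (hυ : ∀ i, 0 < υ i)
    (R Ψ Υ : Matrix (Fin n) (Fin n) ℝ)
    (hR : R = Matrix.diagonal r) (hΨ : Ψ = Matrix.diagonal ψv)
    (hΥ : Υ = Matrix.diagonal υ)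
    (Ud0 : Fin n → ℝ)
    (RDec : Fin n → ℝ)
    (hRDec : RDec = (Υ⁻¹ * ((1 + Y * R)⁻¹ * Y)) *ᵥ Ud0)
    (hRDecpos : ∀ j, 0 < RDec j)
    (rc1 : ℝ)
    (hrc1 : rc1 = ((fun _ => (1 : ℝ)) ⬝ᵥ (Ψ⁻¹ *ᵥ Ud0)) /
      ((fun _ => (1 : ℝ)) ⬝ᵥ (Ψ⁻¹ *ᵥ (((Y⁻¹ + R) * Υ) *ᵥ (fun _ => (1 : ℝ))))))
    (hrc1nn : 0 ≤ rc1)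
    (Rlow Rbar : ℝ)
    (hRlow : Rlow = Finset.univ.inf' ⟨⟨0, hn⟩, Finset.mem_univ _⟩ RDec)
    (hRbar : Rbar = Finset.univ.sup' ⟨⟨0, hn⟩, Finset.mem_univ _⟩ RDec)
    (Uss U : Fin n → ℝ)
    (hUss : Uss = (Y⁻¹ * Υ) *ᵥ RDec)
    (hU : U = rc1 • ((Y⁻¹ * Υ) *ᵥ (fun _ => (1 : ℝ)))) :
    ∀ i, (rc1 / Rbar) * Uss i ≤ U i ∧ U i ≤ (rc1 / Rlow) * Uss i := by
  subst hΥ hRlow hRbar hUss hU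
  have : Nonempty (Fin n) := ⟨⟨0, hn⟩⟩
  obtain ⟨lower, upper⟩ := cooperative_voltage_between_decentralized_voltages_general
    (mul_diagonal_nonneg hYinvnn fun j ↦ (hυ j).le) hrc1nn hRDecpos
  exact fun i ↦ ⟨lower i, upper i⟩
end

section
/- Let n ≥ 1, let Y_c be a real symmetric n×n matrix with Y_c·1ₙ = 0, let Y_s = diag(G_11,…,G_nn) with G_ii ≥ 0, assume Y = Y_s + Y_c is invertible, and let Υ = diag(I_1^max,…,I_n^max) with I_k^max > 0. Then the steady voltage vector U = r_{c1}·Y⁻¹Υ·1ₙ has all components equal (for r_{c1} ≠ 0), i.e. Y⁻¹Υ·1ₙ is a scalar multiple of 1ₙ, if and only if there exists a positive scalar ε such that Υ = ε·Y_s. -/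
open Matrix

theorem diagonal_eq_smul_diagonal_iff {ι R S : Type*} [DecidableEq ι] [Zero R]
    [SMulZeroClass S R] {c : S} {d e : ι → R} :
    diagonal e = c • diagonal d ↔ e = c • d := by
  rw [← diagonal_smul, diagonal_injective.eq_iff]

theorem mulVec_const {m n R : Type*} [Fintype n] [CommSemiring R] (A : Matrix m n R) (c : R) :
    (A *ᵥ fun _ => c) = c • (A *ᵥ 1) := by
  rw [← mulVec_smul]
  congr 1
  ext
  simp

section

variable {ι R : Type*} [Fintype ι] [DecidableEq ι]

theorem diagonal_mulVec_one [NonAssocSemiring R] (d : ι → R) : diagonal d *ᵥ 1 = d := by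
  ext i
  rw [mulVec_diagonal, Pi.one_apply, mul_one]

theorem diagonal_add_mulVec_one [NonAssocSemiring R] {L : Matrix ι ι R} (hL : L *ᵥ 1 = 0)
    (d : ι → R) : (diagonal d + L) *ᵥ 1 = d := by
  rw [add_mulVec, hL, add_zero, diagonal_mulVec_one]

variable [CommRing R]

theorem inv_mulVec_eq_iff_eq_mulVec {A : Matrix ι ι R} (hA : IsUnit A.det) {v w : ι → R} :
    A⁻¹ *ᵥ v = w ↔ v = A *ᵥ w := by
  constructor
  · rintro rfl
    rw [mulVec_mulVec, mul_nonsing_inv A hA, one_mulVec]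
  · rintro rfl
    rw [mulVec_mulVec, nonsing_inv_mul A hA, one_mulVec]

theorem inv_mul_diagonal_mulVec_one_eq_const_iff {L : Matrix ι ι R} (hL : L *ᵥ 1 = 0)
    {d e : ι → R} (hdet : IsUnit (diagonal d + L).det) {c : R} :
    (((diagonal d + L)⁻¹ * diagonal e) *ᵥ 1 = fun _ => c) ↔ e = c • d := by
  rw [← mulVec_mulVec, diagonal_mulVec_one, inv_mulVec_eq_iff_eq_mulVec hdet, mulVec_const,
    diagonal_add_mulVec_one hL]

theorem equal_voltage_iff_maxcurrent_proportional_shunt_general [Nonempty ι] [PartialOrder R]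
    [MulPosReflectLT R] {Yc : Matrix ι ι R} (hYc : Yc *ᵥ 1 = 0) {G Imax : ι → R}
    (hG : ∀ i, 0 ≤ G i) (hdet : IsUnit (diagonal G + Yc).det) (hImax : ∀ i, 0 < Imax i) :
    (∃ c : R, ((diagonal G + Yc)⁻¹ * diagonal Imax) *ᵥ 1 = fun _ => c) ↔
      ∃ ε : R, 0 < ε ∧ diagonal Imax = ε • diagonal G := by
  simp only [inv_mul_diagonal_mulVec_one_eq_const_iff hYc hdet, diagonal_eq_smul_diagonal_iff]
  refine exists_congr fun c => (and_iff_right_of_imp fun hc => ?_).symm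
  obtain ⟨i⟩ := ‹Nonempty ι›
  have hpos : 0 < c * G i := (hImax i).trans_eq (congrFun hc i)
  exact pos_of_mul_pos_left hpos (hG i)

end

/-- The steady voltage vector `Y⁻¹Υ1ₙ` is a scalar multiple of `1ₙ`
(all nodes share the same output voltage) iff `Υ = ε·Y_s` for some positive scalar `ε`. -/
theorem equal_voltage_iff_maxcurrent_proportional_shunt
    (n : ℕ) (hn : 0 < n)
    (Yc : Matrix (Fin n) (Fin n) ℝ) (hYcsym : Yc.IsSymm)
    (hYc1 : Yc *ᵥ (fun _ => (1 : ℝ)) = 0)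
    (G : Fin n → ℝ) (hG : ∀ i, 0 ≤ G i)
    (Ys : Matrix (Fin n) (Fin n) ℝ) (hYs : Ys = Matrix.diagonal G)
    (Y : Matrix (Fin n) (Fin n) ℝ) (hY : Y = Ys + Yc) (hYunit : IsUnit Y.det)
    (Imax : Fin n → ℝ) (hImax : ∀ k, 0 < Imax k)
    (Υ : Matrix (Fin n) (Fin n) ℝ) (hΥ : Υ = Matrix.diagonal Imax) :
    (∃ c : ℝ, (Y⁻¹ * Υ) *ᵥ (fun _ => (1 : ℝ)) = fun _ => c) ↔
      ∃ ε : ℝ, 0 < ε ∧ Υ = ε • Ys := by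
  subst hYs hY hΥ
  have : Nonempty (Fin n) := Fin.pos_iff_nonempty.mp hn
  exact equal_voltage_iff_maxcurrent_proportional_shunt_general hYc1 hG hYunit hImax
end
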